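/- Let θ : S(V) → V' be a linear map from the symmetric algebra on V (over a field of characteristic zero) to a vector space V'. Then there is a unique coalgebra morphism θ' : S(V) → S(V') whose composition with the projection S(V') → V' onto the degree-1 part equals θ minus its counit part; explicitly θ'(μ) = Σ_{n≥0} (1/n!) θ(μ_{(1)})···θ(μ_{(n)}) in Sweedler notation. -/

import Mathlib

open TensorProduct

noncomputable section

/-- The commutativity relation on the tensor algebra. -/
inductive SymmRel (k V : Type*) [Field k] [AddCommGroup V] [Module k V] :
    TensorAlgebra k V → TensorAlgebra k V → Prop
  | comm (a b : TensorAlgebra k V) : SymmRel k V (a * b) (b * a)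

/-- The symmetric algebra `S(V)` on a vector space `V`. -/
def SymmAlg (k V : Type*) [Field k] [AddCommGroup V] [Module k V] : Type _ :=
  RingQuot (SymmRel k V)

variable (k V : Type*) [Field k] [AddCommGroup V] [Module k V]

instance : Ring (SymmAlg k V) := inferInstanceAs (Ring (RingQuot (SymmRel k V)))

instance : Algebra k (SymmAlg k V) :=
  inferInstanceAs (Algebra k (RingQuot (SymmRel k V)))

theorem SymmAlg.mul_comm' (a b : RingQuot (SymmRel k V)) : a * b = b * a := by
  obtain ⟨x, rfl⟩ := RingQuot.mkAlgHom_surjective k (SymmRel k V) a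
  obtain ⟨y, rfl⟩ := RingQuot.mkAlgHom_surjective k (SymmRel k V) b
  rw [← map_mul, ← map_mul, RingQuot.mkAlgHom_rel k (SymmRel.comm x y)]

instance : CommRing (SymmAlg k V) :=
  { (inferInstance : Ring (SymmAlg k V)) with
    mul_comm := SymmAlg.mul_comm' k V }

/-- The canonical inclusion `V → S(V)`. -/
def SymmAlg.ι : V →ₗ[k] SymmAlg k V :=
  (RingQuot.mkAlgHom k (SymmRel k V)).toLinearMap ∘ₗ TensorAlgebra.ι k

/-- Lifting a linear map `V → A` (`A` commutative) to an algebra map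
`S(V) → A`: the universal property of the symmetric algebra. -/
def SymmAlg.lift {A : Type*} [CommRing A] [Algebra k A] (φ : V →ₗ[k] A) :
    SymmAlg k V →ₐ[k] A :=
  RingQuot.liftAlgHom k
    ⟨TensorAlgebra.lift k φ, by
      intro x y h
      cases h with
      | comm a b => rw [map_mul, map_mul, mul_comm]⟩

/-- The comultiplication of `S(V)`, the algebra map sending `v` to
`v ⊗ 1 + 1 ⊗ v` (so elements of `V` are primitive). -/
def SymmAlg.comul : SymmAlg k V →ₐ[k] SymmAlg k V ⊗[k] SymmAlg k V :=
  SymmAlg.lift k V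
    (((TensorProduct.mk k (SymmAlg k V) (SymmAlg k V)).flip 1
        + TensorProduct.mk k (SymmAlg k V) (SymmAlg k V) 1) ∘ₗ SymmAlg.ι k V)

/-- The counit of `S(V)`, killing the positive-degree part. -/
def SymmAlg.counit : SymmAlg k V →ₐ[k] k := SymmAlg.lift k V 0

/-!
The convolution algebra of linear maps from a cocommutative coalgebra `C` to a commutative algebra
carries an exponential `exp a = ∑ aⁿ / n!`, defined whenever `a` is locally nilpotent. It turns sums
into products and is natural in both variables.

Let `ι : V' → S(V')` be the inclusion and `b : C → V'`. Since `Δ ∘ ι = ι ⊗ 1 + 1 ⊗ ι` and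
`ε ∘ ι = 0`, the map `f = exp (ι ∘ b)` satisfies `Δ ∘ f = (f ⊗ 1) * (1 ⊗ f) = (f ⊗ f) ∘ Δ` and
`ε ∘ f = exp 0 = ε`. Its degree-one part is `b`, because the projection `p` kills constants and
products of elements of the augmentation ideal. Conversely `exp (ι ∘ p)` is the identity of `S(V')`,
so a coalgebra morphism `f` with `p ∘ f = b` is `exp (ι ∘ p) ∘ f = exp (ι ∘ p ∘ f) = exp (ι ∘ b)`.

On `C = S(V)` multiplication by a primitive element is dual to a derivation of the convolution
algebra, whence every functional vanishing at `1` is locally nilpotent.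
-/

open Filter Coalgebra WithConv

section TruncExp

variable {k} {A B : Type*}

variable (k) in
/-- The truncated exponential series `∑_{n < N} aⁿ / n!`. -/
def truncExp [Ring A] [Algebra k A] (N : ℕ) (a : A) : A :=
  ∑ n ∈ Finset.range N, (n.factorial : k)⁻¹ • a ^ n

theorem truncExp_succ [Ring A] [Algebra k A] (N : ℕ) (a : A) :
    truncExp k (N + 1) a = truncExp k N a + (N.factorial : k)⁻¹ • a ^ N :=
  Finset.sum_range_succ _ _

theorem map_truncExp [Ring A] [Algebra k A] [Ring B] [Algebra k B] (h : A →ₐ[k] B) (N : ℕ)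
    (a : A) : h (truncExp k N a) = truncExp k N (h a) := by
  simp only [truncExp, map_sum, map_smul, map_pow]

theorem truncExp_zero_right [Ring A] [Algebra k A] (N : ℕ) : truncExp k (N + 1) (0 : A) = 1 := by
  simp [truncExp, Finset.sum_range_succ']

theorem eventually_truncExp_add [CharZero k] [CommRing A] [Algebra k A] {a b : A}
    (ha : IsNilpotent a) (hb : IsNilpotent b) :
    ∀ᶠ N in atTop, truncExp k N (a + b) = truncExp k N a * truncExp k N b := by
  let _ : Algebra ℚ A := ((algebraMap k A).comp (algebraMap ℚ k)).toAlgebra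
  have eventually_eq_exp {c : A} (hc : IsNilpotent c) :
      ∀ᶠ N in atTop, truncExp k N c = IsNilpotent.exp c := by
    obtain ⟨m, hm⟩ := hc
    filter_upwards [eventually_ge_atTop m] with N hN
    rw [IsNilpotent.exp_eq_sum (pow_eq_zero_of_le hN hm)]
    refine Finset.sum_congr rfl fun n _ => ?_
    rw [Algebra.smul_def, Algebra.smul_def, RingHom.algebraMap_toAlgebra, RingHom.comp_apply,
      map_inv₀ (algebraMap ℚ k), map_natCast]
  filter_upwards [eventually_eq_exp ha, eventually_eq_exp hb,
    eventually_eq_exp ((Commute.all a b).isNilpotent_add ha hb)] with N hNa hNb hNab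
  rw [hNa, hNb, hNab, IsNilpotent.exp_add_of_commute (Commute.all a b) ha hb]

end TruncExp

section Convolution

variable {R B C A A' : Type*} [CommSemiring R] [AddCommMonoid B] [Module R B] [Coalgebra R B]
  [AddCommMonoid C] [Module R C] [Coalgebra R C]

theorem toConv_algHom_comp_pow [Semiring A] [Algebra R A] [Semiring A'] [Algebra R A']
    (h : A →ₐ[R] A') (a : WithConv (C →ₗ[R] A)) (n : ℕ) :
    toConv (h.toLinearMap ∘ₗ (a ^ n).ofConv) = toConv (h.toLinearMap ∘ₗ a.ofConv) ^ n := by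
  induction n with
  | zero => ext x; simp
  | succ n ih => rw [pow_succ, pow_succ, ← ih, LinearMap.algHom_comp_convMul_distrib]

theorem toConv_comp_coalgHom_pow [Semiring A] [Algebra R A] (F : B →ₗc[R] C)
    (a : WithConv (C →ₗ[R] A)) (n : ℕ) :
    toConv ((a ^ n).ofConv ∘ₗ F.toLinearMap) = toConv (a.ofConv ∘ₗ F.toLinearMap) ^ n := by
  induction n with
  | zero => ext x; simp
  | succ n ih => rw [pow_succ, pow_succ, ← ih, LinearMap.convMul_comp_coalgHom_distrib]

theorem toConv_includeLeft_mul_includeRight [Semiring A] [Algebra R A] [Semiring A'] [Algebra R A']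
    (f : C →ₗ[R] A) (g : C →ₗ[R] A') :
    toConv ((Algebra.TensorProduct.includeLeft : A →ₐ[R] A ⊗[R] A').toLinearMap ∘ₗ f) *
        toConv ((Algebra.TensorProduct.includeRight : A' →ₐ[R] A ⊗[R] A').toLinearMap ∘ₗ g) =
      toConv (TensorProduct.map f g ∘ₗ comul) := by
  ext x
  rw [(ℛ R x).convMul_apply]
  simp [← (ℛ R x).eq]

theorem smul_one_convMul_apply [CommSemiring A] [Algebra R A] (y : A) (f : WithConv (C →ₗ[R] A))
    (x : C) : ((y • (1 : WithConv (C →ₗ[R] A))) * f) x = y * f x := by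
  rw [smul_mul_assoc, one_mul]
  rfl

section VanishingIdeal

variable [Ring A] [Algebra R A]

/-- The largest ideal of the convolution algebra all of whose members vanish at `x`. -/
def convVanishingIdeal (x : C) : Ideal (WithConv (C →ₗ[R] A)) where
  carrier := {f | ∀ g : WithConv (C →ₗ[R] A), (g * f) x = 0}
  add_mem' hf hg h := by
    rw [mul_add]
    exact (congrArg₂ (· + ·) (hf h) (hg h)).trans (add_zero 0)
  zero_mem' g := by rw [mul_zero]; rfl
  smul_mem' c f hf g := by rw [smul_eq_mul, ← mul_assoc]; exact hf _

theorem apply_eq_zero_of_mem_convVanishingIdeal {x : C} {f : WithConv (C →ₗ[R] A)}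
    (hf : f ∈ convVanishingIdeal x) : f x = 0 := by
  simpa only [one_mul] using hf 1

theorem inf_le_convVanishingIdeal_add (x y : C) :
    (convVanishingIdeal x ⊓ convVanishingIdeal y : Ideal (WithConv (C →ₗ[R] A))) ≤
      convVanishingIdeal (x + y) := fun f ⟨hx, hy⟩ g => by
  rw [map_add, hx g, hy g, add_zero]

theorem convVanishingIdeal_le_smul (r : R) (x : C) :
    (convVanishingIdeal x : Ideal (WithConv (C →ₗ[R] A))) ≤ convVanishingIdeal (r • x) :=
  fun f hx g => by rw [map_smul, hx g, smul_zero]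

/- Only the finitely many tensor factors of `Δ x` matter. -/
theorem eventually_sub_mem_convVanishingIdeal {ι : Type*} {l : Filter ι}
    {F : ι → WithConv (C →ₗ[R] A)} {f : WithConv (C →ₗ[R] A)}
    (h : ∀ x, ∀ᶠ i in l, F i x = f x) (x : C) :
    ∀ᶠ i in l, F i - f ∈ convVanishingIdeal x := by
  have h_factors : ∀ᶠ i in l, ∀ j ∈ (ℛ R x).index, F i ((ℛ R x).right j) = f ((ℛ R x).right j) :=
    (eventually_all_finset _).2 fun j _ => h _
  filter_upwards [h_factors] with i hi g
  rw [(ℛ R x).convMul_apply]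
  refine Finset.sum_eq_zero fun j hj => ?_
  rw [ofConv_sub, LinearMap.sub_apply, hi j hj, sub_self, mul_zero]

/-- Local nilpotency in the convolution algebra: every point is killed by almost all convolution
powers of `a`, so that power series in `a` can be evaluated pointwise. -/
def IsConvNilpotent (a : WithConv (C →ₗ[R] A)) : Prop :=
  ∀ x, ∀ᶠ n in atTop, (a ^ n) x = 0

end VanishingIdeal

theorem IsConvNilpotent.isNilpotent_mkₐ [CommRing A] [Algebra R A] [IsCocomm R C]
    {a : WithConv (C →ₗ[R] A)} (ha : IsConvNilpotent a) (x : C) :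
    IsNilpotent (Ideal.Quotient.mkₐ R (convVanishingIdeal x) a) := by
  obtain ⟨n, hn⟩ := (eventually_sub_mem_convVanishingIdeal (f := 0) ha x).exists
  rw [sub_zero] at hn
  exact ⟨n, by rw [← map_pow]; exact Ideal.Quotient.eq_zero_iff_mem.2 hn⟩

end Convolution

section Bialgebra

variable {R H A : Type*} [CommSemiring R] [Semiring H] [Bialgebra R H] [CommRing A] [Algebra R A]

theorem convMul_apply_one (f g : WithConv (H →ₗ[R] A)) : (f * g) 1 = f 1 * g 1 := by
  simp [Algebra.TensorProduct.one_def]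

variable [IsCocomm R H] {v : H}

/-- The derivation `f ↦ f(v * _)` of the convolution algebra attached to a primitive element `v` of
a bialgebra. Regarding functionals on `S(V)` as formal power series on `V`, it is the derivative in
direction `v`. -/
def convDeriv (hv : comul (R := R) v = v ⊗ₜ 1 + 1 ⊗ₜ v) :
    Derivation R (WithConv (H →ₗ[R] A)) (WithConv (H →ₗ[R] A)) :=
  Derivation.mk'
    { toFun f := toConv (f.ofConv ∘ₗ LinearMap.mulLeft R v)
      map_add' _ _ := rfl
      map_smul' _ _ := rfl }
    fun f g => by
      ext x
      change (f * g) (v * x) = (f * toConv (g.ofConv ∘ₗ LinearMap.mulLeft R v)) x +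
        (g * toConv (f.ofConv ∘ₗ LinearMap.mulLeft R v)) x
      rw [mul_comm g, LinearMap.convMul_apply, Bialgebra.comul_mul, hv, ← (ℛ R x).eq,
        (ℛ R x).convMul_apply, (ℛ R x).convMul_apply]
      simp [add_mul, Finset.mul_sum, Finset.sum_add_distrib, add_comm]

theorem convDeriv_apply (hv : comul (R := R) v = v ⊗ₜ 1 + 1 ⊗ₜ v) (f : WithConv (H →ₗ[R] A))
    (x : H) : convDeriv hv f x = f (v * x) := rfl

theorem mem_convVanishingIdeal_mul (hv : comul (R := R) v = v ⊗ₜ 1 + 1 ⊗ₜ v) {x : H}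
    {f : WithConv (H →ₗ[R] A)} (hf : f ∈ convVanishingIdeal x)
    (hDf : convDeriv hv f ∈ convVanishingIdeal x) : f ∈ convVanishingIdeal (v * x) := fun g => by
  rw [← convDeriv_apply hv, Derivation.leibniz, smul_eq_mul, smul_eq_mul, mul_comm f]
  exact (congrArg₂ (· + ·) (hDf g) (hf (convDeriv hv g))).trans (add_zero 0)

end Bialgebra

section ConvExp

variable {k} {B C A A' : Type*} [AddCommMonoid B] [Module k B] [Coalgebra k B]
  [AddCommMonoid C] [Module k C] [Coalgebra k C]
  [Ring A] [Algebra k A] [Ring A'] [Algebra k A']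

theorem truncExp_conv_apply (N : ℕ) (a : WithConv (C →ₗ[k] A)) (x : C) :
    truncExp k N a x = ∑ n ∈ Finset.range N, (n.factorial : k)⁻¹ • (a ^ n) x := by
  simp [truncExp, LinearMap.sum_apply]

/-- `e` is the convolution exponential of `a`: at every point the series `∑ aⁿ / n!` is eventually
constant with value `e`. In Sweedler notation, `e x = ∑ (1/n!) a(x₍₁₎) ⋯ a(x₍ₙ₎)`. -/
def HasConvExp (a e : WithConv (C →ₗ[k] A)) : Prop :=
  ∀ x, ∀ᶠ N in atTop, truncExp k N a x = e x

theorem IsConvNilpotent.exists_hasConvExp {a : WithConv (C →ₗ[k] A)}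
    (ha : IsConvNilpotent a) : ∃ e, HasConvExp a e := by
  have eventually_const (x : C) : ∃ y, ∀ᶠ N in atTop, truncExp k N a x = y := by
    obtain ⟨N, hN⟩ := eventually_atTop.1 (ha x)
    refine ⟨truncExp k N a x, eventually_atTop.2 ⟨N, fun M hM => ?_⟩⟩
    induction M, hM using Nat.le_induction with
    | base => rfl
    | succ M hM ih =>
      rw [truncExp_succ, ofConv_add, LinearMap.add_apply, ih, ofConv_smul, LinearMap.smul_apply,
        hN M hM, smul_zero, add_zero]
  choose g hg using eventually_const
  refine ⟨toConv { toFun := g, map_add' := fun x y => ?_, map_smul' := fun c x => ?_ }, hg⟩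
  · obtain ⟨N, hx, hy, hxy⟩ := ((hg x).and ((hg y).and (hg (x + y)))).exists
    rw [← hx, ← hy, ← hxy, map_add]
  · obtain ⟨N, hx, hcx⟩ := ((hg x).and (hg (c • x))).exists
    rw [← hx, ← hcx, map_smul, RingHom.id_apply]

namespace HasConvExp

variable {a b e f : WithConv (C →ₗ[k] A)}

theorem unique (he : HasConvExp a e) (hf : HasConvExp a f) : e = f := by
  ext x
  obtain ⟨N, hNe, hNf⟩ := ((he x).and (hf x)).exists
  exact hNe.symm.trans hNf

theorem zero : HasConvExp (0 : WithConv (C →ₗ[k] A)) 1 := fun x => by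
  filter_upwards [eventually_ge_atTop 1] with N hN
  obtain ⟨M, rfl⟩ := Nat.exists_eq_add_of_le' hN
  rw [truncExp_zero_right]

theorem algHom_comp (h : A →ₐ[k] A') (he : HasConvExp a e) :
    HasConvExp (toConv (h.toLinearMap ∘ₗ a.ofConv)) (toConv (h.toLinearMap ∘ₗ e.ofConv)) :=
  fun x => (he x).mono fun N hN => by
    rw [truncExp_conv_apply] at hN ⊢
    simp only [← toConv_algHom_comp_pow, LinearMap.comp_apply, ← hN, map_sum, map_smul,
      AlgHom.toLinearMap_apply]

theorem comp_coalgHom (he : HasConvExp a e) (F : B →ₗc[k] C) :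
    HasConvExp (toConv (a.ofConv ∘ₗ F.toLinearMap)) (toConv (e.ofConv ∘ₗ F.toLinearMap)) :=
  fun x => (he (F x)).mono fun N hN => by
    rw [truncExp_conv_apply] at hN ⊢
    simp only [← toConv_comp_coalgHom_pow]
    exact hN

theorem isConvNilpotent [CharZero k] (he : HasConvExp a e) : IsConvNilpotent a := fun x => by
  filter_upwards [he x, (tendsto_add_atTop_nat 1).eventually (he x)] with N hN hN'
  rw [truncExp_succ, ofConv_add, LinearMap.add_apply, hN, add_eq_left, ofConv_smul,
    LinearMap.smul_apply] at hN'
  exact (smul_eq_zero_iff_right (inv_ne_zero (Nat.cast_ne_zero.2 N.factorial_ne_zero))).1 hN'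

section Commutative

variable {A : Type*} [CommRing A] [Algebra k A] [IsCocomm k C] {a b e f : WithConv (C →ₗ[k] A)}

theorem eventually_mkₐ_eq (he : HasConvExp a e) (x : C) :
    ∀ᶠ N in atTop, truncExp k N (Ideal.Quotient.mkₐ k (convVanishingIdeal x) a) =
      Ideal.Quotient.mkₐ k (convVanishingIdeal x) e := by
  filter_upwards [eventually_sub_mem_convVanishingIdeal he x] with N hN
  rw [← map_truncExp]
  exact Ideal.Quotient.eq.2 hN

/- Modulo the vanishing ideal of a point `a` and `b` are nilpotent, so the functional equation of
the exponential of nilpotent elements applies. -/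
theorem add [CharZero k] (he : HasConvExp a e) (hf : HasConvExp b f) :
    HasConvExp (a + b) (e * f) := fun x => by
  filter_upwards [he.eventually_mkₐ_eq x, hf.eventually_mkₐ_eq x,
    eventually_truncExp_add (k := k) (he.isConvNilpotent.isNilpotent_mkₐ x)
      (hf.isConvNilpotent.isNilpotent_mkₐ x)] with N hNe hNf hN
  rw [hNe, hNf, ← map_add, ← map_truncExp, ← map_mul] at hN
  exact sub_eq_zero.1 (apply_eq_zero_of_mem_convVanishingIdeal (Ideal.Quotient.eq.1 hN))

end Commutative

end HasConvExp

end ConvExp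

namespace SymmAlg

variable {k V}

section Bialgebra

theorem lift_ι {A : Type*} [CommRing A] [Algebra k A] (φ : V →ₗ[k] A) (v : V) :
    lift k V φ (ι k V v) = φ v :=
  (RingQuot.liftAlgHom_mkAlgHom_apply _ _ _ _).trans (TensorAlgebra.lift_ι_apply φ v)

theorem algHom_ext {A : Type*} [Semiring A] [Algebra k A] {f g : SymmAlg k V →ₐ[k] A}
    (h : ∀ v, f (ι k V v) = g (ι k V v)) : f = g :=
  RingQuot.ringQuot_ext' _ _ _ (TensorAlgebra.hom_ext (LinearMap.ext h))

theorem comul_ι (v : V) : comul k V (ι k V v) = ι k V v ⊗ₜ[k] 1 + 1 ⊗ₜ[k] ι k V v :=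
  lift_ι _ v

theorem counit_ι (v : V) : counit k V (ι k V v) = 0 :=
  lift_ι _ v

theorem adjoin_range_ι : Algebra.adjoin k (Set.range (ι k V)) = ⊤ := by
  set S := Algebra.adjoin k (Set.range (ι k V))
  let φ : V →ₗ[k] S :=
    (ι k V).codRestrict S.toSubmodule fun v => Algebra.subset_adjoin ⟨v, rfl⟩
  have h_retract : S.val.comp (lift k V φ) = AlgHom.id k _ :=
    algHom_ext fun v => congrArg S.val (lift_ι φ v)
  refine eq_top_iff.2 fun x _ => ?_
  rw [← AlgHom.id_apply (R := k) x, ← h_retract]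
  exact (lift k V φ x).2

@[elab_as_elim]
theorem induction_on {P : SymmAlg k V → Prop} (x : SymmAlg k V) (one : P 1)
    (ι_mul : ∀ v x, P x → P (ι k V v * x)) (add : ∀ x y, P x → P y → P (x + y))
    (smul : ∀ (c : k) x, P x → P (c • x)) : P x := by
  have hx : x ∈ Subalgebra.toSubmodule (Algebra.adjoin k (Set.range (ι k V))) := by
    rw [adjoin_range_ι]; trivial
  rw [Algebra.adjoin_eq_span] at hx
  induction hx using Submodule.span_induction with
  | mem x hx =>
    induction hx using Submonoid.closure_induction_left with
    | one => exact one
    | mul_left _ hv y _ ih =>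
      obtain ⟨v, rfl⟩ := hv
      exact ι_mul v y ih
  | zero => simpa only [zero_smul] using smul 0 1 one
  | add x y _ _ hx hy => exact add x y hx hy
  | smul c x _ hx => exact smul c x hx

instance : Bialgebra k (SymmAlg k V) :=
  Bialgebra.ofAlgHom (comul k V) (counit k V)
    (algHom_ext fun v => by
      simp [comul_ι, Algebra.TensorProduct.one_def, TensorProduct.add_tmul,
        TensorProduct.tmul_add, add_assoc])
    (algHom_ext fun v => by simp [comul_ι, counit_ι])
    (algHom_ext fun v => by simp [comul_ι, counit_ι])

theorem coalgebraCounit_apply (x : SymmAlg k V) : Coalgebra.counit (R := k) x = counit k V x := rfl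

instance : IsCocomm k (SymmAlg k V) where
  comm_comp_comul := congrArg AlgHom.toLinearMap <|
    show (Algebra.TensorProduct.comm k _ _).toAlgHom.comp (comul k V) = comul k V from
      algHom_ext fun v => by simp [comul_ι, add_comm]

end Bialgebra

section ConvNilpotent

variable {A : Type*} [CommRing A] [Algebra k A]

theorem exists_pow_mem_convVanishingIdeal {a : WithConv (SymmAlg k V →ₗ[k] A)} (ha : a 1 = 0)
    (x : SymmAlg k V) : ∃ n, a ^ n ∈ convVanishingIdeal x := by
  induction x using induction_on with
  | one => exact ⟨1, fun g => by rw [pow_one, convMul_apply_one, ha, mul_zero]⟩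
  | ι_mul v x ih =>
    obtain ⟨n, hn⟩ := ih
    refine ⟨n + 1, mem_convVanishingIdeal_mul (comul_ι v)
      (Ideal.pow_mem_of_pow_mem _ hn n.le_succ) ?_⟩
    rw [Derivation.leibniz_pow, Nat.add_sub_cancel]
    exact nsmul_mem (Ideal.mul_mem_right _ _ hn) _
  | add x y hx hy =>
    obtain ⟨n, hn⟩ := hx
    obtain ⟨m, hm⟩ := hy
    exact ⟨max n m, inf_le_convVanishingIdeal_add x y
      ⟨Ideal.pow_mem_of_pow_mem _ hn (le_max_left n m),
        Ideal.pow_mem_of_pow_mem _ hm (le_max_right n m)⟩⟩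
  | smul c x hx => exact hx.imp fun n hn => convVanishingIdeal_le_smul c x hn

theorem isConvNilpotent_of_apply_one {a : WithConv (SymmAlg k V →ₗ[k] A)} (ha : a 1 = 0) :
    IsConvNilpotent a := fun x => by
  obtain ⟨n, hn⟩ := exists_pow_mem_convVanishingIdeal ha x
  filter_upwards [eventually_ge_atTop n] with m hm
  exact apply_eq_zero_of_mem_convVanishingIdeal (Ideal.pow_mem_of_pow_mem _ hn hm)

end ConvNilpotent

/-- `p` is the projection of `S(V)` onto its degree-one part `V`, characterised as the linear
retraction of `ι` that is a derivation along the counit. -/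
structure IsDegreeOneProj (p : SymmAlg k V →ₗ[k] V) : Prop where
  apply_ι (v : V) : p (ι k V v) = v
  apply_mul (x y : SymmAlg k V) : p (x * y) = counit k V x • p y + counit k V y • p x

namespace IsDegreeOneProj

variable {p : SymmAlg k V →ₗ[k] V}

theorem apply_one (hp : IsDegreeOneProj p) : p 1 = 0 := by
  simpa using hp.apply_mul 1 1

theorem convDeriv_toConv_ι_comp (hp : IsDegreeOneProj p) (v : V) :
    convDeriv (comul_ι v) (toConv (ι k V ∘ₗ p)) = ι k V v • 1 := by
  ext x
  change ι k V (p (ι k V v * x)) = ι k V v * algebraMap k _ (counit k V x)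
  rw [hp.apply_mul, counit_ι, zero_smul, zero_add, hp.apply_ι, map_smul, mul_comm,
    Algebra.smul_def]

theorem pow_succ_apply_ι_mul (hp : IsDegreeOneProj p) (n : ℕ) (v : V) (x : SymmAlg k V) :
    (toConv (ι k V ∘ₗ p) ^ (n + 1)) (ι k V v * x) =
      ((n : k) + 1) • (ι k V v * (toConv (ι k V ∘ₗ p) ^ n) x) := by
  rw [← convDeriv_apply (comul_ι v), Derivation.leibniz_pow, Nat.add_sub_cancel,
    hp.convDeriv_toConv_ι_comp, smul_eq_mul, mul_comm, ← smul_one_convMul_apply,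
    ← Nat.cast_smul_eq_nsmul k, Nat.cast_succ]
  rfl

theorem truncExp_apply_ι_mul [CharZero k] (hp : IsDegreeOneProj p) (N : ℕ) (v : V)
    (x : SymmAlg k V) :
    truncExp k (N + 1) (toConv (ι k V ∘ₗ p)) (ι k V v * x) =
      ι k V v * truncExp k N (toConv (ι k V ∘ₗ p)) x := by
  rw [truncExp_conv_apply, truncExp_conv_apply, Finset.sum_range_succ', Finset.mul_sum]
  have h_term (n : ℕ) : ((n + 1).factorial : k)⁻¹ * ((n : k) + 1) = (n.factorial : k)⁻¹ := by
    rw [Nat.factorial_succ, Nat.cast_mul, Nat.cast_succ, mul_inv_rev, mul_assoc,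
      inv_mul_cancel₀ n.cast_add_one_ne_zero, mul_one]
  simp [hp.pow_succ_apply_ι_mul, smul_smul, h_term, coalgebraCounit_apply, counit_ι]

theorem hasConvExp_id [CharZero k] (hp : IsDegreeOneProj p) :
    HasConvExp (toConv (ι k V ∘ₗ p)) (toConv LinearMap.id) := fun x => by
  induction x using induction_on with
  | one =>
    rw [← map_add_atTop_eq_nat 1, eventually_map]
    refine .of_forall fun N => ?_
    simp [truncExp_conv_apply, Finset.sum_range_succ', pow_succ, convMul_apply_one, hp.apply_one,
      -LinearMap.convMul_apply]
  | ι_mul v x ih =>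
    rw [← map_add_atTop_eq_nat 1, eventually_map]
    exact ih.mono fun N hN => by rw [hp.truncExp_apply_ι_mul, hN]; rfl
  | add x y hx hy => filter_upwards [hx, hy] with N hNx hNy; rw [map_add, map_add, hNx, hNy]
  | smul c x hx => filter_upwards [hx] with N hN; rw [map_smul, map_smul, hN]

end IsDegreeOneProj

section Lift

variable {C : Type*} [AddCommMonoid C] [Module k C] [Coalgebra k C]

theorem counit_toConv_ι_comp_pow_succ_apply (b : C →ₗ[k] V) (n : ℕ) (x : C) :
    counit k V ((toConv (ι k V ∘ₗ b) ^ (n + 1)) x) = 0 := by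
  have h_zero : toConv ((counit k V).toLinearMap ∘ₗ (toConv (ι k V ∘ₗ b)).ofConv) = 0 := by
    ext y
    exact counit_ι (b y)
  have h_pow := toConv_algHom_comp_pow (counit k V) (toConv (ι k V ∘ₗ b)) (n + 1)
  rw [h_zero, zero_pow n.succ_ne_zero] at h_pow
  exact DFunLike.congr_fun (congrArg ofConv h_pow) x

theorem IsDegreeOneProj.apply_convMul {p : SymmAlg k V →ₗ[k] V} (hp : IsDegreeOneProj p)
    {f g : WithConv (C →ₗ[k] SymmAlg k V)} (hf : ∀ x, counit k V (f x) = 0)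
    (hg : ∀ x, counit k V (g x) = 0) (x : C) : p ((f * g) x) = 0 := by
  rw [(ℛ k x).convMul_apply]
  simp [hp.apply_mul, hf, hg]

theorem IsDegreeOneProj.apply_truncExp {p : SymmAlg k V →ₗ[k] V} (hp : IsDegreeOneProj p)
    (b : C →ₗ[k] V) (N : ℕ) (x : C) : p (truncExp k (N + 2) (toConv (ι k V ∘ₗ b)) x) = b x := by
  have h_higher (n : ℕ) : p ((toConv (ι k V ∘ₗ b) ^ (n + 1 + 1)) x) = 0 := by
    rw [pow_succ]
    exact hp.apply_convMul (counit_toConv_ι_comp_pow_succ_apply b n) (fun y => counit_ι (b y)) x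
  rw [truncExp_conv_apply, Finset.sum_range_succ', Finset.sum_range_succ']
  simp [h_higher, hp.apply_ι, hp.apply_one, Algebra.algebraMap_eq_smul_one,
    -LinearMap.convMul_apply]

variable {b : C →ₗ[k] V} {f : C →ₗ[k] SymmAlg k V}

theorem IsDegreeOneProj.comp_eq_of_hasConvExp {p : SymmAlg k V →ₗ[k] V}
    (hp : IsDegreeOneProj p) (hf : HasConvExp (toConv (ι k V ∘ₗ b)) (toConv f)) : p ∘ₗ f = b := by
  ext x
  obtain ⟨N, hN⟩ := ((tendsto_add_atTop_nat 2).eventually (hf x)).exists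
  exact (congrArg p hN).symm.trans (hp.apply_truncExp b N x)

theorem counit_comp_of_hasConvExp (hf : HasConvExp (toConv (ι k V ∘ₗ b)) (toConv f)) :
    (counit k V).toLinearMap ∘ₗ f = Coalgebra.counit := by
  have h_zero : (counit k V).toLinearMap ∘ₗ ι k V ∘ₗ b = 0 :=
    LinearMap.ext fun x => counit_ι (b x)
  have h_exp := hf.algHom_comp (counit k V)
  rw [ofConv_toConv, h_zero] at h_exp
  exact toConv_injective (h_exp.unique .zero)

theorem comul_comp_of_hasConvExp [CharZero k] [IsCocomm k C]
    (hf : HasConvExp (toConv (ι k V ∘ₗ b)) (toConv f)) :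
    (comul k V).toLinearMap ∘ₗ f = TensorProduct.map f f ∘ₗ Coalgebra.comul := by
  let inl : SymmAlg k V →ₐ[k] SymmAlg k V ⊗[k] SymmAlg k V := Algebra.TensorProduct.includeLeft
  let inr : SymmAlg k V →ₐ[k] SymmAlg k V ⊗[k] SymmAlg k V := Algebra.TensorProduct.includeRight
  have h_primitive : (comul k V).toLinearMap ∘ₗ ι k V ∘ₗ b =
      inl.toLinearMap ∘ₗ ι k V ∘ₗ b + inr.toLinearMap ∘ₗ ι k V ∘ₗ b :=
    LinearMap.ext fun x => comul_ι (b x)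
  have h_exp := hf.algHom_comp (comul k V)
  rw [ofConv_toConv, h_primitive] at h_exp
  have h_unique := h_exp.unique ((hf.algHom_comp inl).add (hf.algHom_comp inr))
  rw [toConv_includeLeft_mul_includeRight] at h_unique
  exact toConv_injective h_unique

theorem IsDegreeOneProj.hasConvExp_coalgHom [CharZero k] {p : SymmAlg k V →ₗ[k] V}
    (hp : IsDegreeOneProj p) (f : C →ₗc[k] SymmAlg k V) :
    HasConvExp (toConv (ι k V ∘ₗ p ∘ₗ f.toLinearMap)) (toConv f.toLinearMap) :=
  hp.hasConvExp_id.comp_coalgHom f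

end Lift

end SymmAlg

theorem symAlg_cofree_lift_general {k C V' : Type*} [Field k] [CharZero k]
    [AddCommMonoid C] [Module k C] [Coalgebra k C] [IsCocomm k C]
    [AddCommGroup V'] [Module k V'] {p : SymmAlg k V' →ₗ[k] V'}
    (hp : SymmAlg.IsDegreeOneProj p) {b : C →ₗ[k] V'}
    (hb : IsConvNilpotent (toConv (SymmAlg.ι k V' ∘ₗ b))) :
    ∃! f : C →ₗ[k] SymmAlg k V',
      ((SymmAlg.comul k V').toLinearMap ∘ₗ f = TensorProduct.map f f ∘ₗ Coalgebra.comul) ∧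
      ((SymmAlg.counit k V').toLinearMap ∘ₗ f = Coalgebra.counit) ∧
      p ∘ₗ f = b := by
  obtain ⟨e, he⟩ := hb.exists_hasConvExp
  refine ⟨e.ofConv, ⟨SymmAlg.comul_comp_of_hasConvExp he, SymmAlg.counit_comp_of_hasConvExp he,
    hp.comp_eq_of_hasConvExp he⟩, ?_⟩
  rintro f ⟨h_comul, h_counit, rfl⟩
  let F : C →ₗc[k] SymmAlg k V' :=
    { f with counit_comp := h_counit, map_comp_comul := h_comul.symm }
  exact toConv_injective ((hp.hasConvExp_coalgHom F).unique he)

/-- (cofreeness-type universal property used in formal group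
theory) Let `θ : S(V) → V'` be a linear map, char `k` = 0.  Given the
projection `p' : S(V') → V'` onto the degree-1 part (characterized by
`p' 1 = 0`, `p' ∘ ι = id`, and `p'(a·b) = ε(a)•p'(b) + ε(b)•p'(a)`), there is
a unique coalgebra morphism `θ' : S(V) → S(V')` whose composition with `p'`
equals `θ` minus its counit part `μ ↦ ε(μ) • θ(1)`. -/
theorem symAlg_cofree_lift {k V V' : Type*} [Field k] [CharZero k]
    [AddCommGroup V] [Module k V] [AddCommGroup V'] [Module k V']
    (θ : SymmAlg k V →ₗ[k] V')
    (p' : SymmAlg k V' →ₗ[k] V')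
    (hp1 : p' 1 = 0)
    (hpι : ∀ v : V', p' (SymmAlg.ι k V' v) = v)
    (hpmul : ∀ a b : SymmAlg k V',
      p' (a * b) = SymmAlg.counit k V' a • p' b + SymmAlg.counit k V' b • p' a) :
    ∃! f : SymmAlg k V →ₗ[k] SymmAlg k V',
      -- `f` is a coalgebra morphism:
      ((SymmAlg.comul k V').toLinearMap ∘ₗ f
          = TensorProduct.map f f ∘ₗ (SymmAlg.comul k V).toLinearMap) ∧
      ((SymmAlg.counit k V').toLinearMap ∘ₗ f
          = (SymmAlg.counit k V).toLinearMap) ∧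
      -- its degree-1 part is `θ` minus its counit part:
      (p' ∘ₗ f = θ - (SymmAlg.counit k V).toLinearMap.smulRight (θ 1)) :=
  symAlg_cofree_lift_general ⟨hpι, hpmul⟩ (SymmAlg.isConvNilpotent_of_apply_one (by simp))

end
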